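/- arXiv:1501.06206 — 10 statements merged into one kernel-verified Lean document; each statement's English description precedes it below -/
import Mathlib

section
/- Let S and S' be families of subsets of a set U such that S ⊆ S' and every member of S' \ S includes some nonempty member of S as a subset. Then a set H is a minimal hitting set for S if and only if H is a minimal hitting set for S'. -/
/-!
The two families have the same hitting sets inside `⋃₀ S`: a set hitting every nonempty member of `S`
also hits every member of `S' \ S`, since such a member contains a nonempty member of `S`
(`IsHittingSet.extend`). Conversely a hitting set for `S'` becomes one for `S` once it is cut down
to `⋃₀ S` (`IsHittingSet.restrict`), and a minimal one must already lie in `⋃₀ S`, because the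
cut-down set still hits `S'`.
-/

/-- `H` is a hitting set for the family `S`. -/
def IsHittingSet {U : Type*} (S : Set (Set U)) (H : Set U) : Prop :=
  H ⊆ ⋃₀ S ∧ ∀ X ∈ S, X.Nonempty → (X ∩ H).Nonempty

/-- `H` is a minimal hitting set for the family `S`. -/
def IsMinimalHittingSet {U : Type*} (S : Set (Set U)) (H : Set U) : Prop :=
  IsHittingSet S H ∧ ∀ H' ⊂ H, ¬ IsHittingSet S H'

theorem IsHittingSet.extend {U : Type*} {S S' : Set (Set U)} (hsub : S ⊆ S')
    (hext : ∀ X ∈ S' \ S, ∃ Y ∈ S, Y.Nonempty ∧ Y ⊆ X) {H : Set U}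
    (h : IsHittingSet S H) : IsHittingSet S' H := by
  refine ⟨h.1.trans (Set.sUnion_subset_sUnion hsub), fun X hX hne => ?_⟩
  by_cases hXS : X ∈ S
  · exact h.2 X hXS hne
  · obtain ⟨Y, hY, hYne, hYX⟩ := hext X ⟨hX, hXS⟩
    exact (h.2 Y hY hYne).mono (Set.inter_subset_inter_left H hYX)

theorem IsHittingSet.restrict {U : Type*} {S S' : Set (Set U)} (hsub : S ⊆ S') {H : Set U}
    (h : IsHittingSet S' H) : IsHittingSet S (H ∩ ⋃₀ S) := by
  refine ⟨Set.inter_subset_right, fun X hX hne => ?_⟩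
  obtain ⟨x, hxX, hxH⟩ := h.2 X (hsub hX) hne
  exact ⟨x, hxX, hxH, X, hX, hxX⟩

/-- If `S ⊆ S'` and every member of `S' \ S` contains a nonempty member of `S`,
then minimal hitting sets for `S` and for `S'` coincide. -/
theorem minimal_hitting_set_iff {U : Type*} (S S' : Set (Set U))
    (hsub : S ⊆ S')
    (hext : ∀ X ∈ S' \ S, ∃ Y ∈ S, Y.Nonempty ∧ Y ⊆ X)
    (H : Set U) :
    IsMinimalHittingSet S H ↔ IsMinimalHittingSet S' H := by
  constructor
  · rintro ⟨hH, hmin⟩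
    refine ⟨hH.extend hsub hext, fun H' hlt hH' => hmin H' hlt ?_⟩
    have hr := hH'.restrict hsub
    rwa [Set.inter_eq_left.mpr (hlt.subset.trans hH.1)] at hr
  · rintro ⟨hH, hmin⟩
    have hr := hH.restrict hsub
    have heq : H ∩ ⋃₀ S = H := by
      by_contra hne
      exact hmin _ (Set.inter_subset_left.ssubset_of_ne hne) (hr.extend hsub hext)
    rw [heq] at hr
    exact ⟨hr, fun H' hlt hH' => hmin H' hlt (hH'.extend hsub hext)⟩
end

section
/- Identify each sentence (literal) with its set of models, a subset of the set W of interpretations, so that a set of literals Δ is a family of subsets of W whose set of models Mod(Δ) is the intersection ⋂₀ Δ, and disjunction of sentences is union of model sets. For any two families Δ₁, Δ₂ of subsets of W, define their disjunction Δ₁ ∨ Δ₂ := (Δ₁ ∩ Δ₂) ∪ { A ∪ B : A ∈ Δ₁ \ Δ₂, B ∈ Δ₂ \ Δ₁ }. Then Mod(Δ₁ ∨ Δ₂) = Mod(Δ₁) ∪ Mod(Δ₂), i.e. ⋂₀ ((Δ₁ ∩ Δ₂) ∪ { A ∪ B : A ∈ Δ₁ \ Δ₂, B ∈ Δ₂ \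 Δ₁ }) = (⋂₀ Δ₁) ∪ (⋂₀ Δ₂). -/
/-- identifying sentences with their model sets, the models of the disjunction
`Δ₁ ∨ Δ₂ = (Δ₁ ∩ Δ₂) ∪ { A ∪ B : A ∈ Δ₁ \ Δ₂, B ∈ Δ₂ \ Δ₁ }` of two explanations are the
union of the models of `Δ₁` and the models of `Δ₂`. -/
theorem models_of_disjunction {W : Type*} (Δ₁ Δ₂ : Set (Set W)) :
    ⋂₀ ((Δ₁ ∩ Δ₂) ∪ {C : Set W | ∃ A ∈ Δ₁ \ Δ₂, ∃ B ∈ Δ₂ \ Δ₁, C = A ∪ B}) =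
      (⋂₀ Δ₁) ∪ (⋂₀ Δ₂) := by
  ext w
  constructor
  · intro h
    by_contra hw
    simp only [Set.mem_union, Set.mem_sInter, not_or, not_forall] at hw
    obtain ⟨⟨A, hA, hwA⟩, ⟨B, hB, hwB⟩⟩ := hw
    -- A member falsified by `w` cannot be shared, so `A ∪ B` is one of the disjunctions.
    have hA₂ : A ∉ Δ₂ := fun hA' => hwA (h A (Or.inl ⟨hA, hA'⟩))
    have hB₁ : B ∉ Δ₁ := fun hB' => hwB (h B (Or.inl ⟨hB', hB⟩))
    exact (h (A ∪ B) (Or.inr ⟨A, ⟨hA, hA₂⟩, B, ⟨hB, hB₁⟩, rfl⟩)).elim hwA hwB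
  · rintro (h | h) C (hC | ⟨A, hA, B, hB, rfl⟩)
    · exact h C hC.1
    · exact Or.inl (h A hA.1)
    · exact h C hC.2
    · exact Or.inr (h B hB.1)
end

section
/- Let W be a finite type of possible worlds, with belief bases and inputs identified with their sets of models. An operator ∘ : Set W → Set W → Set W satisfies, for all ψ, μ, φ ⊆ W: (R1) ∘ψμ ⊆ μ; (R2) if ψ ∩ μ ≠ ∅ then ∘ψμ = ψ ∩ μ; (R3) if μ ≠ ∅ then ∘ψμ ≠ ∅; (R5) (∘ψμ) ∩ φ ⊆ ∘ψ(μ ∩ φ); (R6) if (∘ψμ) ∩ φ ≠ ∅ then ∘ψ(μ ∩ φ) ⊆ (∘ψμ) ∩ φ — if and only if there exists an assignment taking each ψ ⊆ W to a total preorder ≼_ψ on W that is faithful, i.e. (i) if w, w' ∈ ψ then w ≼_ψ w' and w' ≼_ψ w, and (ii) if w ∈ ψ and w' ∉ ψ then w ≺_ψ w', and such that ∘ψμ = Min(μ, ≼_ψ) for all ψ, μ ⊆ W. (Postulate R4, irrelevance of syntax, holds automatically in this model-set formulation.) -/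
/-!
For postulates ⇒ order, put `x ≼_ψ y` iff `x ∈ rev ψ {x, y}`, i.e. `x` survives when the input leaves
only `x` and `y` open. Restricting an input `μ` to the pair `{x, y} ⊆ μ`, (R5) says that a selected
`x ∈ rev ψ μ` is below every `y ∈ μ` (`pair_of_mem`), and (R6) says that anything in `μ` below a
selected element is itself selected (`mem_of_pair`). These two facts identify `rev ψ μ` with the
minimal elements of `μ`; applied to `{x, y, z}`, together with (R3), they give transitivity.
Faithfulness is (R2) on pairs.

For order ⇒ postulates, finiteness is used only for (R3), where it supplies a minimal element of a
nonempty set.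
-/

/-- The set of `r`-minimal elements of `A`. -/
def minSet {W : Type*} (A : Set W) (r : W → W → Prop) : Set W :=
  {x ∈ A | ∀ y ∈ A, ¬ (r y x ∧ ¬ r x y)}

section Selection

variable {W : Type*} {f : Set W → Set W}

theorem pair_of_mem (h5 : ∀ μ φ, f μ ∩ φ ⊆ f (μ ∩ φ)) {μ : Set W} {x y : W}
    (hxμ : x ∈ μ) (hy : y ∈ μ) (hx : x ∈ f μ) : x ∈ f {x, y} := by
  have h := h5 μ {x, y} ⟨hx, by simp⟩
  rwa [Set.inter_eq_right.2 (Set.pair_subset hxμ hy)] at h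

theorem mem_of_pair (h6 : ∀ μ φ, f μ ∩ φ ≠ ∅ → f (μ ∩ φ) ⊆ f μ ∩ φ) {μ : Set W} {x y : W}
    (hxμ : x ∈ μ) (hyμ : y ∈ μ) (hy : y ∈ f μ) (h : x ∈ f {x, y}) : x ∈ f μ := by
  have h' := h6 μ {x, y} (Set.nonempty_iff_ne_empty.1 ⟨y, hy, by simp⟩)
  rw [Set.inter_eq_right.2 (Set.pair_subset hxμ hyμ)] at h'
  exact (h' h).1

theorem pair_trans (h1 : ∀ μ, f μ ⊆ μ) (h3 : ∀ μ, μ ≠ ∅ → f μ ≠ ∅)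
    (h5 : ∀ μ φ, f μ ∩ φ ⊆ f (μ ∩ φ))
    (h6 : ∀ μ φ, f μ ∩ φ ≠ ∅ → f (μ ∩ φ) ⊆ f μ ∩ φ) {x y z : W}
    (hxy : x ∈ f {x, y}) (hyz : y ∈ f {y, z}) : x ∈ f {x, z} := by
  have hx : x ∈ ({x, y, z} : Set W) := by simp
  have hy : y ∈ ({x, y, z} : Set W) := by simp
  have hz : z ∈ ({x, y, z} : Set W) := by simp
  -- Being selected from `{x, y, z}` propagates from `z` to `y` and from `y` to `x`.
  have key : x ∈ f {x, y, z} := by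
    obtain ⟨w, hw⟩ := Set.nonempty_iff_ne_empty.2
      (h3 {x, y, z} (Set.nonempty_iff_ne_empty.1 ⟨x, hx⟩))
    rcases h1 _ hw with rfl | rfl | rfl
    · exact hw
    · exact mem_of_pair h6 hx hy hw hxy
    · exact mem_of_pair h6 hx hy (mem_of_pair h6 hy hz hw hyz) hxy
  exact pair_of_mem h5 hx hz key

theorem pair_total (h1 : ∀ μ, f μ ⊆ μ) (h3 : ∀ μ, μ ≠ ∅ → f μ ≠ ∅) (x y : W) :
    x ∈ f {x, y} ∨ y ∈ f {y, x} := by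
  obtain ⟨w, hw⟩ := Set.nonempty_iff_ne_empty.2
    (h3 {x, y} (Set.nonempty_iff_ne_empty.1 ⟨x, by simp⟩))
  rcases h1 _ hw with rfl | rfl
  · exact Or.inl hw
  · exact Or.inr (by rwa [Set.pair_comm])

theorem eq_minSet_pair (h1 : ∀ μ, f μ ⊆ μ) (h3 : ∀ μ, μ ≠ ∅ → f μ ≠ ∅)
    (h5 : ∀ μ φ, f μ ∩ φ ⊆ f (μ ∩ φ))
    (h6 : ∀ μ φ, f μ ∩ φ ≠ ∅ → f (μ ∩ φ) ⊆ f μ ∩ φ) (μ : Set W) :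
    f μ = minSet μ (fun x y => x ∈ f {x, y}) := by
  ext x
  constructor
  · exact fun hx => ⟨h1 _ hx, fun y hy h => h.2 (pair_of_mem h5 (h1 _ hx) hy hx)⟩
  · rintro ⟨hx, hmin⟩
    obtain ⟨y, hy⟩ := Set.nonempty_iff_ne_empty.2
      (h3 μ (Set.nonempty_iff_ne_empty.1 ⟨x, hx⟩))
    have hyx := pair_of_mem h5 (h1 _ hy) hx hy
    exact mem_of_pair h6 hx (h1 _ hy) hy (by_contra fun h => hmin y (h1 _ hy) ⟨hyx, h⟩)

end Selection

theorem minSet_nonempty {W : Type*} [Finite W] {r : W → W → Prop}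
    (ht : Transitive r) {μ : Set W} (hμ : μ.Nonempty) : (minSet μ r).Nonempty := by
  -- The strict part of `r` is transitive and irreflexive, hence well-founded on a finite type.
  let s : W → W → Prop := fun a b => r a b ∧ ¬ r b a
  haveI : IsTrans W s :=
    ⟨fun a b c hab hbc => ⟨ht hab.1 hbc.1, fun hca => hab.2 (ht hbc.1 hca)⟩⟩
  haveI : Std.Irrefl s := ⟨fun a h => h.2 h.1⟩
  obtain ⟨m, hm, hmin⟩ := (Finite.wellFounded_of_trans_of_irrefl s).has_min μ hμ
  exact ⟨m, hm, hmin⟩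

/-- Katsuno–Mendelzon representation theorem for revision, in model-set form:
an operator satisfies (R1),(R2),(R3),(R5),(R6) iff it is given by minimization under a
faithful assignment of total preorders. -/
theorem km_revision_representation {W : Type*} [Fintype W]
    (rev : Set W → Set W → Set W) :
    ((∀ ψ μ : Set W, rev ψ μ ⊆ μ) ∧
     (∀ ψ μ : Set W, ψ ∩ μ ≠ ∅ → rev ψ μ = ψ ∩ μ) ∧
     (∀ ψ μ : Set W, μ ≠ ∅ → rev ψ μ ≠ ∅) ∧
     (∀ ψ μ φ : Set W, rev ψ μ ∩ φ ⊆ rev ψ (μ ∩ φ)) ∧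
     (∀ ψ μ φ : Set W, rev ψ μ ∩ φ ≠ ∅ → rev ψ (μ ∩ φ) ⊆ rev ψ μ ∩ φ)) ↔
    (∃ le : Set W → W → W → Prop,
      (∀ ψ, Reflexive (le ψ)) ∧
      (∀ ψ, Transitive (le ψ)) ∧
      (∀ ψ : Set W, ∀ x y : W, le ψ x y ∨ le ψ y x) ∧
      (∀ ψ : Set W, ∀ w ∈ ψ, ∀ w' ∈ ψ, le ψ w w' ∧ le ψ w' w) ∧
      (∀ ψ : Set W, ∀ w ∈ ψ, ∀ w' ∉ ψ, le ψ w w' ∧ ¬ le ψ w' w) ∧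
      (∀ ψ μ : Set W, rev ψ μ = minSet μ (le ψ))) := by
  constructor
  · rintro ⟨h1, h2, h3, h5, h6⟩
    have hpair : ∀ ψ : Set W, ∀ w ∈ ψ, ∀ w', rev ψ {w, w'} = ψ ∩ {w, w'} := fun ψ w hw w' =>
      h2 ψ _ (Set.nonempty_iff_ne_empty.1 ⟨w, hw, by simp⟩)
    refine ⟨fun ψ x y => x ∈ rev ψ {x, y}, fun ψ x => ?_,
      fun ψ x y z => pair_trans (h1 ψ) (h3 ψ) (h5 ψ) (h6 ψ),
      fun ψ => pair_total (h1 ψ) (h3 ψ), fun ψ w hw w' hw' => ?_, fun ψ w hw w' hw' => ?_,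
      fun ψ => eq_minSet_pair (h1 ψ) (h3 ψ) (h5 ψ) (h6 ψ)⟩
    · exact (pair_total (h1 ψ) (h3 ψ) x x).elim id id
    · simp only [hpair ψ w hw, hpair ψ w' hw']
      simp [hw, hw']
    · simp only [Set.pair_comm w' w, hpair ψ w hw]
      simp [hw, hw']
  · rintro ⟨le, -, ht, htot, hin, hout, hrev⟩
    simp only [hrev]
    refine ⟨fun ψ μ x hx => hx.1, fun ψ μ hne => ?_, fun ψ μ hne => ?_,
      fun ψ μ φ x hx => ⟨⟨hx.1.1, hx.2⟩, fun y hy => hx.1.2 y hy.1⟩, fun ψ μ φ hne => ?_⟩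
    · obtain ⟨w, hwψ, hwμ⟩ := Set.nonempty_iff_ne_empty.2 hne
      ext x
      constructor
      · rintro ⟨hx, hmin⟩
        exact ⟨by_contra fun h => hmin w hwμ (hout ψ w hwψ x h), hx⟩
      · rintro ⟨hxψ, hx⟩
        refine ⟨hx, fun y _ h => h.2 ?_⟩
        by_cases hy : y ∈ ψ
        · exact (hin ψ x hxψ y hy).1
        · exact (hout ψ x hxψ y hy).1
    · exact Set.nonempty_iff_ne_empty.1
        (minSet_nonempty (ht ψ) (Set.nonempty_iff_ne_empty.2 hne))
    · obtain ⟨y, ⟨hyμ, hymin⟩, hyφ⟩ := Set.nonempty_iff_ne_empty.2 hne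
      rintro x ⟨⟨hxμ, hxφ⟩, hxmin⟩
      have hxy : le ψ x y := by
        by_contra h
        exact hxmin y ⟨hyμ, hyφ⟩ ⟨(htot ψ x y).resolve_left h, h⟩
      exact ⟨⟨hxμ, fun z hz h =>
        hymin z hz ⟨ht ψ h.1 hxy, fun hyz => h.2 (ht ψ hxy hyz)⟩⟩, hxφ⟩
end

section
/- Let W be a finite type of possible worlds, with belief bases and inputs identified with their sets of models. An operator ⋄ : Set W → Set W → Set W satisfies, for all ψ, ψ₁, ψ₂, μ, μ₁, μ₂, φ ⊆ W and all w ∈ W: (U1) ⋄ψμ ⊆ μ; (U2) if ψ ⊆ μ then ⋄ψμ = ψ; (U3) if ψ ≠ ∅ and μ ≠ ∅ then ⋄ψμ ≠ ∅; (U5) (⋄ψμ) ∩ φ ⊆ ⋄ψ(μ ∩ φ); (U6) if ⋄ψμ₁ ⊆ μ₂ and ⋄ψμ₂ ⊆ μ₁ then ⋄ψμ₁ = ⋄ψμ₂; (U7) ⋄{w}μ₁ ∩ ⋄{w}μ₂ ⊆ ⋄{w}(μ₁ ∪ μ₂); (U8) ⋄(ψ₁ ∪ ψ₂)μ = (⋄ψ₁μ)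 ∪ (⋄ψ₂μ) — if and only if there exists an assignment taking each w ∈ W to a preorder ≼_w on W that is faithful, i.e. w ≺_w w' for every w' ≠ w, and such that ⋄ψμ = ⋃_{w ∈ ψ} Min(μ, ≼_w) for all ψ, μ ⊆ W. (Postulate U4, irrelevance of syntax, holds automatically in this model-set formulation.) -/
/-- On a finite type the minimal elements are dense below: every element of `A` has a minimal
element of `A` below it. -/
lemma exists_minSet_le {W : Type*} [Finite W] {r : W → W → Prop}
    (hr : Reflexive r) (ht : Transitive r) {A : Set W} {x : W} (hx : x ∈ A) :
    ∃ y ∈ minSet A r, r y x := by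
  let _ : Preorder W :=
    { le := r, le_refl := hr, le_trans := fun _ _ _ h₁ h₂ => ht h₁ h₂ }
  obtain ⟨m, hmx, hm⟩ := (Set.toFinite A).exists_le_minimal hx
  exact ⟨m, ⟨hm.1, fun y hy h => h.2 (hm.2 hy h.1)⟩, hmx⟩

/-- The semantic content of (U6): two sets each containing the other's minimal elements have the
same minimal elements. The hypotheses are symmetric, so one inclusion suffices. -/
lemma minSet_subset_of_cross {W : Type*} [Finite W] {r : W → W → Prop}
    (hr : Reflexive r) (ht : Transitive r) {A B : Set W}
    (hAB : minSet A r ⊆ B) (hBA : minSet B r ⊆ A) : minSet A r ⊆ minSet B r := by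
  intro x hx
  refine ⟨hAB hx, fun y hy h => ?_⟩
  obtain ⟨z, hz, hzy⟩ := exists_minSet_le hr ht hy
  exact hx.2 z (hBA hz) ⟨ht hzy h.1, fun hxz => h.2 (ht hxz hzy)⟩

/-- Under a faithful relation the world `w` is the only minimal element of any set containing it. -/
lemma minSet_eq_singleton {W : Type*} {r : W → W → Prop} {w : W}
    (hf : ∀ w', w' ≠ w → r w w' ∧ ¬ r w' w) {A : Set W} (hw : w ∈ A) : minSet A r = {w} := by
  ext x
  constructor
  · intro hx
    by_contra hne
    exact hx.2 w hw (hf x hne)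
  · rintro rfl
    refine ⟨hw, fun y _ h => ?_⟩
    by_cases hy : y = x
    · subst hy
      exact h.2 h.1
    · exact (hf y hy).2 h.1

/-- The relation revealed by a choice function `f` on pairs: `x` is weakly below `y` when they are
equal or `x` alone is chosen from `{x, y}`. -/
def revealed {W : Type*} (f : Set W → Set W) (x y : W) : Prop :=
  x = y ∨ f {x, y} = {x}

lemma revealed_trans {W : Type*} {f : Set W → Set W}
    (h1 : ∀ μ, f μ ⊆ μ) (h3 : ∀ μ, μ ≠ ∅ → f μ ≠ ∅)
    (h5 : ∀ μ φ, f μ ∩ φ ⊆ f (μ ∩ φ))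
    (h6 : ∀ μ₁ μ₂, f μ₁ ⊆ μ₂ → f μ₂ ⊆ μ₁ → f μ₁ = f μ₂) : Transitive (revealed f) := by
  rintro x y z (rfl | hxy) (rfl | hyz)
  · exact Or.inl rfl
  · exact Or.inr hyz
  · exact Or.inr hxy
  by_cases hxy' : x = y
  · subst hxy'
    exact Or.inr hyz
  by_cases hyz' : y = z
  · subst hyz'
    exact Or.inr hxy
  refine Or.inr ?_
  -- An element chosen from the triple is chosen from every pair containing it.
  have hy : y ∉ f {x, y, z} := fun h => by
    have := h5 _ {x, y} ⟨h, by simp⟩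
    rw [show ({x, y, z} : Set W) ∩ {x, y} = {x, y} by ext a; simp; tauto, hxy] at this
    exact hxy' this.symm
  have hz : z ∉ f {x, y, z} := fun h => by
    have := h5 _ {y, z} ⟨h, by simp⟩
    rw [show ({x, y, z} : Set W) ∩ {y, z} = {y, z} by ext a; simp; tauto, hyz] at this
    exact hyz' this.symm
  have hsub : f {x, y, z} ⊆ {x} := fun a ha => by
    rcases h1 _ ha with rfl | rfl | rfl
    · rfl
    · exact (hy ha).elim
    · exact (hz ha).elim
  have htriple : f {x, y, z} = {x} :=
    (Set.subset_singleton_iff_eq.1 hsub).resolve_left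
      (h3 _ (Set.insert_nonempty x _).ne_empty)
  rw [← htriple]
  refine h6 _ _ (fun a ha => ?_) (fun a ha => Or.inl (hsub ha))
  rcases h1 _ ha with rfl | rfl
  · simp
  · simp

/-- A choice function on a finite type that is nonempty-valued and satisfies contraction (U5) and
expansion (U7) is minimization for its revealed relation. -/
lemma choice_eq_minSet_revealed {W : Type*} [Finite W] {f : Set W → Set W}
    (h1 : ∀ μ, f μ ⊆ μ) (h3 : ∀ μ, μ ≠ ∅ → f μ ≠ ∅)
    (h5 : ∀ μ φ, f μ ∩ φ ⊆ f (μ ∩ φ))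
    (h7 : ∀ μ₁ μ₂, f μ₁ ∩ f μ₂ ⊆ f (μ₁ ∪ μ₂)) (μ : Set W) :
    f μ = minSet μ (revealed f) := by
  ext x
  constructor
  · intro hx
    refine ⟨h1 _ hx, ?_⟩
    rintro y hy ⟨rfl | hyx, hn⟩
    · exact hn (Or.inl rfl)
    · have := h5 _ {y, x} ⟨hx, by simp⟩
      rw [Set.inter_eq_right.2 (Set.pair_subset hy (h1 _ hx)), hyx] at this
      exact hn (Or.inl this)
  · intro hx
    have hpair : ∀ y ∈ μ, x ∈ f {x, y} := by
      intro y hy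
      by_contra hxf
      have hsub : f {y, x} ⊆ {y} := fun a ha => by
        rcases h1 _ ha with rfl | rfl
        · rfl
        · rw [Set.pair_comm] at ha
          exact (hxf ha).elim
      have hyx : f {y, x} = {y} := (Set.subset_singleton_iff_eq.1 hsub).resolve_left
        (h3 _ (Set.insert_nonempty y _).ne_empty)
      refine hx.2 y hy ⟨Or.inr hyx, ?_⟩
      rintro (rfl | hxy)
      · exact hxf (by rw [hyx]; rfl)
      · exact hxf (by rw [hxy]; rfl)
    have key : ∀ s : Set W, s.Finite → s ⊆ μ → x ∈ f (insert x s) := by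
      intro s hs
      induction s, hs using Set.Finite.induction_on with
      | empty =>
        intro _
        have := hpair x hx.1
        simpa using this
      | @insert a s _ _ ih =>
        intro hsub
        have := h7 _ _ ⟨hpair a (hsub (Set.mem_insert a s)),
          ih ((Set.subset_insert a s).trans hsub)⟩
        rwa [show ({x, a} : Set W) ∪ insert x s = insert x (insert a s) by
          ext b; simp; tauto] at this
    have := key μ (Set.toFinite μ) subset_rfl
    rwa [Set.insert_eq_of_mem hx.1] at this

/-- Finite distributivity: a map on bases that sends `∅` to `∅` and preserves binary unions is
determined by its values on singletons. -/
lemma eq_biUnion_singleton {W : Type*} [Finite W] {g : Set W → Set W} (h0 : g ∅ = ∅)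
    (h8 : ∀ ψ₁ ψ₂, g (ψ₁ ∪ ψ₂) = g ψ₁ ∪ g ψ₂) (ψ : Set W) : g ψ = ⋃ w ∈ ψ, g {w} := by
  induction ψ, Set.toFinite ψ using Set.Finite.induction_on with
  | empty => simp [h0]
  | insert _ _ ih => rw [Set.insert_eq, h8, ih, ← Set.insert_eq, Set.biUnion_insert]

/-- Katsuno–Mendelzon representation theorem for update with partial preorders:
an operator satisfies (U1),(U2),(U3),(U5),(U6),(U7),(U8) iff it is given by pointwise
minimization under a faithful assignment of preorders. -/
theorem km_update_representation_partial {W : Type*} [Fintype W]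
    (upd : Set W → Set W → Set W) :
    ((∀ ψ μ : Set W, upd ψ μ ⊆ μ) ∧
     (∀ ψ μ : Set W, ψ ⊆ μ → upd ψ μ = ψ) ∧
     (∀ ψ μ : Set W, ψ ≠ ∅ → μ ≠ ∅ → upd ψ μ ≠ ∅) ∧
     (∀ ψ μ φ : Set W, upd ψ μ ∩ φ ⊆ upd ψ (μ ∩ φ)) ∧
     (∀ ψ μ₁ μ₂ : Set W, upd ψ μ₁ ⊆ μ₂ → upd ψ μ₂ ⊆ μ₁ → upd ψ μ₁ = upd ψ μ₂) ∧
     (∀ (w : W) (μ₁ μ₂ : Set W), upd {w} μ₁ ∩ upd {w} μ₂ ⊆ upd {w} (μ₁ ∪ μ₂)) ∧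
     (∀ ψ₁ ψ₂ μ : Set W, upd (ψ₁ ∪ ψ₂) μ = upd ψ₁ μ ∪ upd ψ₂ μ)) ↔
    (∃ le : W → W → W → Prop,
      (∀ w, Reflexive (le w)) ∧
      (∀ w, Transitive (le w)) ∧
      (∀ w w' : W, w' ≠ w → (le w w w' ∧ ¬ le w w' w)) ∧
      (∀ ψ μ : Set W, upd ψ μ = ⋃ w ∈ ψ, minSet μ (le w))) := by
  constructor
  · rintro ⟨h1, h2, h3, h5, h6, h7, h8⟩
    have hs : ∀ w : W, ({w} : Set W) ≠ ∅ := fun w => Set.singleton_ne_empty w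
    refine ⟨fun w => revealed (upd {w}), fun w x => Or.inl rfl,
      fun w => revealed_trans (h1 _) (fun μ => h3 _ μ (hs w)) (h5 _) (h6 _),
      fun w w' hne => ?_, fun ψ μ => ?_⟩
    · refine ⟨Or.inr (h2 _ _ (by simp)), ?_⟩
      rintro (h | h)
      · exact hne h
      · rw [h2 _ _ (by simp)] at h
        exact hne (Set.singleton_injective h).symm
    · rw [eq_biUnion_singleton (g := fun ψ => upd ψ μ) (h2 _ _ (Set.empty_subset μ))
        (fun ψ₁ ψ₂ => h8 ψ₁ ψ₂ μ) ψ]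
      exact Set.iUnion₂_congr fun w _ =>
        choice_eq_minSet_revealed (h1 _) (fun μ => h3 _ μ (hs w)) (h5 _) (h7 w) μ
  · rintro ⟨le, hr, ht, hf, hu⟩
    refine ⟨fun ψ μ => ?_, fun ψ μ hψ => ?_, fun ψ μ hψ hμ => ?_, fun ψ μ φ => ?_,
      fun ψ μ₁ μ₂ h₁ h₂ => ?_, fun w μ₁ μ₂ => ?_, fun ψ₁ ψ₂ μ => ?_⟩
    · rw [hu]
      exact Set.iUnion₂_subset fun w _ x hx => hx.1
    · rw [hu, Set.iUnion₂_congr fun w hw => minSet_eq_singleton (hf w) (hψ hw)]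
      exact Set.biUnion_of_singleton ψ
    · obtain ⟨w, hw⟩ := Set.nonempty_iff_ne_empty.2 hψ
      obtain ⟨x, hx⟩ := Set.nonempty_iff_ne_empty.2 hμ
      obtain ⟨y, hy, _⟩ := exists_minSet_le (hr w) (ht w) hx
      rw [hu]
      exact Set.Nonempty.ne_empty ⟨y, Set.mem_biUnion hw hy⟩
    · rw [hu, hu]
      rintro x ⟨hx, hxφ⟩
      obtain ⟨w, hw, hxw⟩ := Set.mem_iUnion₂.1 hx
      exact Set.mem_biUnion hw ⟨⟨hxw.1, hxφ⟩, fun y hy => hxw.2 y hy.1⟩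
    · rw [hu] at h₁ h₂
      rw [hu, hu]
      refine Set.iUnion₂_congr fun w hw => ?_
      have h₁' := Set.iUnion₂_subset_iff.1 h₁ w hw
      have h₂' := Set.iUnion₂_subset_iff.1 h₂ w hw
      exact (minSet_subset_of_cross (hr w) (ht w) h₁' h₂').antisymm
        (minSet_subset_of_cross (hr w) (ht w) h₂' h₁')
    · simp only [hu, Set.mem_singleton_iff, Set.iUnion_iUnion_eq_left]
      rintro x ⟨hx₁, hx₂⟩
      exact ⟨Or.inl hx₁.1, fun y hy => hy.elim (hx₁.2 y) (hx₂.2 y)⟩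
    · rw [hu, hu, hu, Set.biUnion_union]
end

section
/- Let W be a type of possible worlds and suppose ∘ : Set W → Set W → Set W satisfies the revision postulates, for all ψ, μ, φ ⊆ W: (R1) ∘ψμ ⊆ μ; (R2) if ψ ∩ μ ≠ ∅ then ∘ψμ = ψ ∩ μ; (R3) if μ ≠ ∅ then ∘ψμ ≠ ∅; (R5) (∘ψμ) ∩ φ ⊆ ∘ψ(μ ∩ φ); (R6) if (∘ψμ) ∩ φ ≠ ∅ then ∘ψ(μ ∩ φ) ⊆ (∘ψμ) ∩ φ. Define the update operator pointwise by ⋄ψμ := ⋃_{w ∈ ψ} ∘{w}μ. Then ⋄ satisfies the update postulates, for all ψ, ψ₁, ψ₂, μ, μ₁, μ₂, φ ⊆ W and all w ∈ W: (U1) ⋄ψμ ⊆ μ; (U2) if ψ ⊆ μ then ⋄ψμ = ψ; (U3) if ψ ≠ ∅ and μ ≠ ∅ then ⋄ψμ ≠ ∅; (U5) (⋄ψμ) ∩ φ ⊆ ⋄ψ(μ ∩ φ); (U6) if ⋄ψμ₁ ⊆ μ₂ and ⋄ψμ₂ ⊆ μ₁ then ⋄ψμ₁ = ⋄ψμ₂;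 (U7) ⋄{w}μ₁ ∩ ⋄{w}μ₂ ⊆ ⋄{w}(μ₁ ∪ μ₂); (U8) ⋄(ψ₁ ∪ ψ₂)μ = (⋄ψ₁μ) ∪ (⋄ψ₂μ); (U9) if ⋄{w}μ ∩ {w} ≠ ∅ then ⋄{w}(μ ∩ {w}) ⊆ ⋄{w}μ ∩ {w}. -/
/-!
(U8) holds for any union indexed by worlds, and (U1), (U2), (U3), (U5), (U9) are read off world by world from the corresponding
revision postulates. For (U6), if `rev ψ μ ⊆ φ` then (R3), (R5) and (R6) give
`rev ψ (μ ∩ φ) = rev ψ μ` (`rev_inter_eq`); applied to both inputs at each world, this identifies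
both revisions with the revision by `μ₁ ∩ μ₂`. For (U7), by (R3) the revision by `μ₁ ∪ μ₂` meets
one of the `μᵢ`, and (R6) then puts the revision by that `μᵢ` inside it.
-/

theorem rev_inter_eq {W : Type*} (rev : Set W → Set W → Set W)
    (R3 : ∀ ψ μ : Set W, μ ≠ ∅ → rev ψ μ ≠ ∅)
    (R5 : ∀ ψ μ φ : Set W, rev ψ μ ∩ φ ⊆ rev ψ (μ ∩ φ))
    (R6 : ∀ ψ μ φ : Set W, rev ψ μ ∩ φ ≠ ∅ → rev ψ (μ ∩ φ) ⊆ rev ψ μ ∩ φ)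
    {ψ μ φ : Set W} (h : rev ψ μ ⊆ φ) : rev ψ (μ ∩ φ) = rev ψ μ := by
  rcases eq_or_ne μ ∅ with rfl | hμ
  · rw [Set.empty_inter]
  · have e : rev ψ μ ∩ φ = rev ψ μ := Set.inter_eq_left.2 h
    have h5 := R5 ψ μ φ
    have h6 := R6 ψ μ φ
    rw [e] at h5 h6
    exact (h6 (R3 ψ μ hμ)).antisymm h5

/-- If a revision operator `rev` satisfies (R1),(R2),(R3),(R5),(R6), then the
update operator defined pointwise by `upd ψ μ = ⋃_{w ∈ ψ} rev {w} μ` satisfies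
(U1),(U2),(U3),(U5),(U6),(U7),(U8),(U9). -/
theorem update_from_revision {W : Type*}
    (rev : Set W → Set W → Set W)
    (R1 : ∀ ψ μ : Set W, rev ψ μ ⊆ μ)
    (R2 : ∀ ψ μ : Set W, ψ ∩ μ ≠ ∅ → rev ψ μ = ψ ∩ μ)
    (R3 : ∀ ψ μ : Set W, μ ≠ ∅ → rev ψ μ ≠ ∅)
    (R5 : ∀ ψ μ φ : Set W, rev ψ μ ∩ φ ⊆ rev ψ (μ ∩ φ))
    (R6 : ∀ ψ μ φ : Set W, rev ψ μ ∩ φ ≠ ∅ → rev ψ (μ ∩ φ) ⊆ rev ψ μ ∩ φ)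
    (upd : Set W → Set W → Set W)
    (hupd : ∀ ψ μ : Set W, upd ψ μ = ⋃ w ∈ ψ, rev {w} μ) :
    (∀ ψ μ : Set W, upd ψ μ ⊆ μ) ∧
    (∀ ψ μ : Set W, ψ ⊆ μ → upd ψ μ = ψ) ∧
    (∀ ψ μ : Set W, ψ ≠ ∅ → μ ≠ ∅ → upd ψ μ ≠ ∅) ∧
    (∀ ψ μ φ : Set W, upd ψ μ ∩ φ ⊆ upd ψ (μ ∩ φ)) ∧
    (∀ ψ μ₁ μ₂ : Set W, upd ψ μ₁ ⊆ μ₂ → upd ψ μ₂ ⊆ μ₁ → upd ψ μ₁ = upd ψ μ₂) ∧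
    (∀ (w : W) (μ₁ μ₂ : Set W), upd {w} μ₁ ∩ upd {w} μ₂ ⊆ upd {w} (μ₁ ∪ μ₂)) ∧
    (∀ ψ₁ ψ₂ μ : Set W, upd (ψ₁ ∪ ψ₂) μ = upd ψ₁ μ ∪ upd ψ₂ μ) ∧
    (∀ (w : W) (μ : Set W), upd {w} μ ∩ {w} ≠ ∅ →
        upd {w} (μ ∩ {w}) ⊆ upd {w} μ ∩ {w}) := by
  have hs : ∀ (w : W) (μ : Set W), upd {w} μ = rev {w} μ := by
    intro w μ
    rw [hupd, Set.biUnion_singleton]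
  refine ⟨?_, ?_, ?_, ?_, ?_, ?_, ?_, ?_⟩
  · intro ψ μ
    rw [hupd]
    exact Set.iUnion₂_subset fun w _ => R1 {w} μ
  · intro ψ μ h
    have hw : ∀ w ∈ ψ, rev {w} μ = {w} := by
      intro w hw
      have e : ({w} : Set W) ∩ μ = {w} :=
        Set.inter_eq_left.2 (Set.singleton_subset_iff.2 (h hw))
      rw [R2 {w} μ (by rw [e]; exact Set.singleton_ne_empty w), e]
    rw [hupd, Set.iUnion₂_congr hw, Set.biUnion_of_singleton]
  · intro ψ μ hψ hμ
    obtain ⟨w, hw⟩ := Set.nonempty_iff_ne_empty.2 hψ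
    obtain ⟨x, hx⟩ := Set.nonempty_iff_ne_empty.2 (R3 {w} μ hμ)
    rw [hupd]
    exact Set.nonempty_iff_ne_empty.1 ⟨x, Set.mem_biUnion hw hx⟩
  · intro ψ μ φ x hx
    rw [hupd] at hx ⊢
    obtain ⟨h, hφ⟩ := hx
    obtain ⟨w, hw, hx⟩ := Set.mem_iUnion₂.1 h
    exact Set.mem_biUnion hw (R5 {w} μ φ ⟨hx, hφ⟩)
  · intro ψ μ₁ μ₂ h₁ h₂
    rw [hupd] at h₁ h₂
    rw [hupd, hupd]
    refine Set.iUnion₂_congr fun w hw => ?_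
    rw [← rev_inter_eq rev R3 R5 R6 (Set.iUnion₂_subset_iff.1 h₁ w hw),
      ← rev_inter_eq rev R3 R5 R6 (Set.iUnion₂_subset_iff.1 h₂ w hw), Set.inter_comm]
  · intro w μ₁ μ₂
    simp only [hs]
    rintro x ⟨hx₁, hx₂⟩
    have hne : μ₁ ∪ μ₂ ≠ ∅ :=
      Set.nonempty_iff_ne_empty.1 ⟨x, Or.inl (R1 _ _ hx₁)⟩
    obtain ⟨y, hy⟩ := Set.nonempty_iff_ne_empty.2 (R3 {w} _ hne)
    rcases R1 _ _ hy with h | h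
    · have h6 := R6 {w} (μ₁ ∪ μ₂) μ₁ (Set.nonempty_iff_ne_empty.1 ⟨y, hy, h⟩)
      rw [Set.union_inter_cancel_left] at h6
      exact (h6 hx₁).1
    · have h6 := R6 {w} (μ₁ ∪ μ₂) μ₂ (Set.nonempty_iff_ne_empty.1 ⟨y, hy, h⟩)
      rw [Set.union_inter_cancel_right] at h6
      exact (h6 hx₂).1
  · intro ψ₁ ψ₂ μ
    rw [hupd, hupd, hupd, Set.biUnion_union]
  · intro w μ
    simp only [hs]
    exact R6 {w} μ {w}
end

section
/- Let W be a type of (abductive) interpretations, let S ⊆ W be the set of interpretations satisfying the integrity constraints IC, and let ≼ be a reflexive transitive relation on W that is total on S (for all x, y ∈ S, x ≼ y or y ≼ x), has the minimality property on S (every nonempty F ⊆ S contains a ≼-minimal element of F), and is faithful to the knowledge base KB with model set M, i.e. Min(S, ≼) = M. Define the revision operator rev : Set W → Set W by rev A := Min(A ∩ S, ≼). Then rev satisfies, for all A, B ⊆ W: (success and closure) rev A ⊆ A ∩ S; (consistency) A ∩ S ≠ ∅ if and only if rev A ≠ ∅; (vacuity) if M ∩ A ≠ ∅ then rev A = M ∩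 A; (extended vacuity 1) (rev A) ∩ B ⊆ rev(A ∩ B); (extended vacuity 2) if (rev A) ∩ B ≠ ∅ then rev(A ∩ B) ⊆ (rev A) ∩ B. -/
theorem minSet_inter_subset {W : Type*} {F G : Set W} {le : W → W → Prop} (hFG : F ⊆ G) :
    minSet G le ∩ F ⊆ minSet F le :=
  fun _ ⟨hx, hxF⟩ => ⟨hxF, fun y hy => hx.2 y (hFG hy)⟩

theorem minSet_subset_of_mem {W : Type*} {F G : Set W} {le : W → W → Prop}
    (htrans : Transitive le) (htotal : ∀ x ∈ F, ∀ y ∈ F, le x y ∨ le y x) (hFG : F ⊆ G)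
    {z : W} (hz : z ∈ minSet G le) (hzF : z ∈ F) : minSet F le ⊆ minSet G le := by
  rintro x ⟨hxF, hx⟩
  have hxz : le x z := by
    by_contra h
    exact hx z hzF ⟨(htotal x hxF z hzF).resolve_left h, h⟩
  refine ⟨hFG hxF, fun y hy ⟨hyx, hxy⟩ => hz.2 y hy ⟨htrans hyx hxz, fun hzy => ?_⟩⟩
  exact hxy (htrans hxz hzy)

/-- revision by minimization under a faithful order satisfying the
rationality axioms satisfies the revision postulates. -/
theorem revision_from_order {W : Type*} (S M : Set W) (le : W → W → Prop)
    (hrefl : Reflexive le) (htrans : Transitive le)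
    (htotal : ∀ x ∈ S, ∀ y ∈ S, le x y ∨ le y x)
    (hminimality : ∀ F : Set W, F ⊆ S → F.Nonempty → (minSet F le).Nonempty)
    (hfaithful : minSet S le = M)
    (rev : Set W → Set W)
    (hrev : ∀ A : Set W, rev A = minSet (A ∩ S) le) :
    (∀ A : Set W, rev A ⊆ A ∩ S) ∧
    (∀ A : Set W, A ∩ S ≠ ∅ ↔ rev A ≠ ∅) ∧
    (∀ A : Set W, M ∩ A ≠ ∅ → rev A = M ∩ A) ∧
    (∀ A B : Set W, rev A ∩ B ⊆ rev (A ∩ B)) ∧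
    (∀ A B : Set W, rev A ∩ B ≠ ∅ → rev (A ∩ B) ⊆ rev A ∩ B) := by
  subst hfaithful
  simp only [hrev, ← Set.nonempty_iff_ne_empty]
  refine ⟨fun A x hx => hx.1, fun A => ⟨hminimality _ Set.inter_subset_right, ?_⟩, ?_, ?_, ?_⟩
  · exact fun ⟨x, hx⟩ => ⟨x, hx.1⟩
  · rintro A ⟨z, hz, hzA⟩
    apply Set.Subset.antisymm
    · intro x hx
      exact ⟨minSet_subset_of_mem htrans (fun x hx y hy => htotal x hx.2 y hy.2)
        Set.inter_subset_right hz ⟨hzA, hz.1⟩ hx, hx.1.1⟩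
    · rintro x ⟨hx, hxA⟩
      exact minSet_inter_subset Set.inter_subset_right ⟨hx, hxA, hx.1⟩
  · rintro A B x ⟨hx, hxB⟩
    exact minSet_inter_subset (Set.inter_subset_inter_left S Set.inter_subset_left) ⟨hx, ⟨hx.1.1, hxB⟩, hx.1.2⟩
  · rintro A B ⟨z, hz, hzB⟩ x hx
    exact ⟨minSet_subset_of_mem htrans (fun x hx y hy => htotal x hx.2 y hy.2)
      (Set.inter_subset_inter_left S Set.inter_subset_left) hz ⟨⟨hz.1.1, hzB⟩, hz.1.2⟩ hx, hx.1.1.2⟩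
end

section
/- Let W be a type of (abductive) interpretations, S ⊆ W, and M ⊆ W nonempty, and let rev : Set W → Set W satisfy, for all A, B ⊆ W: rev A ⊆ A ∩ S; A ∩ S ≠ ∅ if and only if rev A ≠ ∅; if M ∩ A ≠ ∅ then rev A = M ∩ A; (rev A) ∩ B ⊆ rev(A ∩ B); and if (rev A) ∩ B ≠ ∅ then rev(A ∩ B) ⊆ (rev A) ∩ B. Then there exists a reflexive transitive relation ≼ on W that is total on S, has the minimality property on S (every nonempty F ⊆ S contains a ≼-minimal element of F), is faithful (Min(S, ≼) = M), and represents rev, i.e. rev A = Min(A ∩ S, ≼) for all A ⊆ W. -/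
/-- every operator satisfying the revision postulates is generated by
minimization under some faithful order satisfying the rationality axioms. -/
theorem order_from_revision {W : Type*} (S M : Set W) (hM : M.Nonempty)
    (rev : Set W → Set W)
    (h1 : ∀ A : Set W, rev A ⊆ A ∩ S)
    (h2 : ∀ A : Set W, A ∩ S ≠ ∅ ↔ rev A ≠ ∅)
    (h3 : ∀ A : Set W, M ∩ A ≠ ∅ → rev A = M ∩ A)
    (h4 : ∀ A B : Set W, rev A ∩ B ⊆ rev (A ∩ B))
    (h5 : ∀ A B : Set W, rev A ∩ B ≠ ∅ → rev (A ∩ B) ⊆ rev A ∩ B) :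
    ∃ le : W → W → Prop,
      Reflexive le ∧ Transitive le ∧
      (∀ x ∈ S, ∀ y ∈ S, le x y ∨ le y x) ∧
      (∀ F : Set W, F ⊆ S → F.Nonempty → (minSet F le).Nonempty) ∧
      minSet S le = M ∧
      (∀ A : Set W, rev A = minSet (A ∩ S) le) := by
  have pair : ∀ (A : Set W) (x y : W), x ∈ A → y ∈ A → A ∩ {x, y} = {x, y} := by
    intro A x y hx hy
    ext w
    simp only [Set.mem_inter_iff, Set.mem_insert_iff, Set.mem_singleton_iff]
    constructor
    · exact fun h => h.2
    · rintro (rfl | rfl) <;> simp [hx, hy]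
  have down : ∀ (A : Set W) (x y : W), x ∈ rev A → y ∈ A → x ∈ rev {x, y} := by
    intro A x y hx hy
    rw [← pair A x y (h1 A hx).1 hy]
    exact h4 A {x, y} ⟨hx, by simp⟩
  have up : ∀ (A : Set W) (x y : W), x ∈ A → y ∈ rev A → x ∈ rev {x, y} → x ∈ rev A := by
    intro A x y hx hy hxy
    rw [← pair A x y hx (h1 A hy).1] at hxy
    have hne : rev A ∩ {x, y} ≠ ∅ := Set.Nonempty.ne_empty ⟨y, hy, by simp⟩
    exact (h5 A {x, y} hne hxy).1
  have nonempty : ∀ (A : Set W) (x : W), x ∈ A → x ∈ S → (rev A).Nonempty := by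
    intro A x hxA hxS
    exact Set.nonempty_iff_ne_empty.2
      ((h2 A).1 (Set.Nonempty.ne_empty ⟨x, hxA, hxS⟩))
  let le : W → W → Prop := fun x y => x = y ∨ x ∈ rev {x, y}
  have repr : ∀ A : Set W, rev A = minSet (A ∩ S) le := by
    intro A
    ext x
    constructor
    · intro hx
      exact ⟨h1 A hx, fun y hy h => h.2 (Or.inr (down A x y hx hy.1))⟩
    · rintro ⟨⟨hxA, hxS⟩, hmin⟩
      obtain ⟨y, hy⟩ := nonempty A x hxA hxS
      have hxy : le x y := by
        by_contra hn
        exact hmin y (h1 A hy) ⟨Or.inr (down A y x hy hxA), hn⟩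
      rcases hxy with rfl | hxy
      · exact hy
      · exact up A x y hxA hy hxy
  refine ⟨le, fun x => Or.inl rfl, ?_, ?_, ?_, ?_, repr⟩
  · rintro x y z (rfl | hxy) (rfl | hyz)
    · exact Or.inl rfl
    · exact Or.inr hyz
    · exact Or.inr hxy
    · right
      have hxS : x ∈ S := (h1 _ hxy).2
      -- membership in `rev {x, y, z}` propagates from `z` to `y` to `x`
      have hyx : y ∈ rev {x, y, z} → x ∈ rev {x, y, z} :=
        fun hy => up _ x y (by simp) hy hxy
      have hx : x ∈ rev {x, y, z} := by
        obtain ⟨w, hw⟩ := nonempty {x, y, z} x (by simp) hxS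
        rcases (h1 _ hw).1 with rfl | rfl | rfl
        · exact hw
        · exact hyx hw
        · exact hyx (up _ y w (by simp) hw hyz)
      exact down _ x z hx (by simp)
  · intro x hx y hy
    obtain ⟨w, hw⟩ := nonempty {x, y} x (by simp) hx
    rcases (h1 _ hw).1 with rfl | rfl
    · exact Or.inl (Or.inr hw)
    · exact Or.inr (Or.inr (down _ w x hw (by simp)))
  · rintro F hF ⟨x, hx⟩
    have h := nonempty F x hx (hF hx)
    rwa [repr F, Set.inter_eq_left.2 hF] at h
  · have h := h3 Set.univ (by simpa using hM.ne_empty)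
    rw [repr Set.univ, Set.univ_inter, Set.inter_univ] at h
    exact h
end

section
/- Let W be a type of (abductive) interpretations, S ⊆ W, and M ⊆ W, and let con : Set W → Set W satisfy the contraction postulates, for all A, B ⊆ W: (closure) con A ⊆ S; (success) if S \ A ≠ ∅ then (con A) \ A ≠ ∅; (inclusion) M ⊆ con A; (vacuity) if ¬(M ⊆ A) then con A = M; (recovery) (con A) ∩ A ⊆ M; (conjunction 1) con(A ∩ B) ⊆ (con A) ∪ (con B); (conjunction 2) if ¬(con(A ∩ B) ⊆ A) then con A ⊆ con(A ∩ B). Define the revision operator by the Levi identity rev A := con(Aᶜ) ∩ A, where Aᶜ is the complement of A in W (the models of the negated sentence). Then rev satisfies the revision postulates, for all A, B ⊆ W: rev A ⊆ A ∩ S; A ∩ S ≠ ∅ if and only if rev A ≠ ∅; if M ∩ A ≠ ∅ then rev A = M ∩ A; (rev A) ∩ B ⊆ rev(A ∩ B); and if (rev A) ∩ B ≠ ∅ then rev(A ∩ B) ⊆ (rev A) ∩ B. -/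
/-! The first three revision postulates are direct translations of closure, success and vacuity
for `Aᶜ`. The last two rest on the decomposition `Aᶜ = (A ∩ B)ᶜ ∩ (Aᶜ ∪ B)`, which makes the
conjunction postulates applicable: the first one, together with recovery for `Aᶜ ∪ B`, bounds
`con Aᶜ` on `A ∩ B` by `con (A ∩ B)ᶜ`; the second one gives `con (A ∩ B)ᶜ ⊆ con Aᶜ`
when `con Aᶜ` meets `A ∩ B`. -/

/-- Levi identity: a contraction operator satisfying the contraction
postulates yields, via `rev A := con Aᶜ ∩ A`, a revision operator satisfying the
revision postulates. -/
theorem levi_identity {W : Type*} (S M : Set W)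
    (con : Set W → Set W)
    (closure : ∀ A : Set W, con A ⊆ S)
    (success : ∀ A : Set W, (S \ A) ≠ ∅ → (con A \ A) ≠ ∅)
    (inclusion : ∀ A : Set W, M ⊆ con A)
    (vacuity : ∀ A : Set W, ¬ (M ⊆ A) → con A = M)
    (recovery : ∀ A : Set W, con A ∩ A ⊆ M)
    (conj1 : ∀ A B : Set W, con (A ∩ B) ⊆ con A ∪ con B)
    (conj2 : ∀ A B : Set W, ¬ (con (A ∩ B) ⊆ A) → con A ⊆ con (A ∩ B))
    (rev : Set W → Set W)
    (hrev : ∀ A : Set W, rev A = con Aᶜ ∩ A) :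
    (∀ A : Set W, rev A ⊆ A ∩ S) ∧
    (∀ A : Set W, A ∩ S ≠ ∅ ↔ rev A ≠ ∅) ∧
    (∀ A : Set W, M ∩ A ≠ ∅ → rev A = M ∩ A) ∧
    (∀ A B : Set W, rev A ∩ B ⊆ rev (A ∩ B)) ∧
    (∀ A B : Set W, rev A ∩ B ≠ ∅ → rev (A ∩ B) ⊆ rev A ∩ B) := by
  have key (A B : Set W) : (A ∩ B)ᶜ ∩ (Aᶜ ∪ B) = Aᶜ := by
    ext w
    simp only [Set.mem_inter_iff, Set.mem_compl_iff, Set.mem_union]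
    tauto
  simp only [hrev]
  refine ⟨fun A w hw => ⟨hw.2, closure _ hw.1⟩, fun A => ⟨fun h => ?_, fun h => ?_⟩,
    fun A h => ?_, fun A B w hw => ?_, fun A B h w hw => ?_⟩
  · have hs := success Aᶜ (by rwa [Set.sdiff_compl, Set.inter_comm])
    rwa [Set.sdiff_compl] at hs
  · obtain ⟨w, hw⟩ := Set.nonempty_iff_ne_empty.2 h
    exact Set.nonempty_iff_ne_empty.1 ⟨w, hw.2, closure _ hw.1⟩
  · obtain ⟨w, hw⟩ := Set.nonempty_iff_ne_empty.2 h
    rw [vacuity Aᶜ fun hM => hM hw.1 hw.2]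
  · obtain ⟨⟨hc, hA⟩, hB⟩ := hw
    rw [← key A B] at hc
    refine ⟨?_, hA, hB⟩
    rcases conj1 _ _ hc with hc | hc
    · exact hc
    -- As `B ⊆ Aᶜ ∪ B`, recovery puts `w` in `M`, and inclusion applies.
    · exact inclusion _ (recovery _ ⟨hc, Or.inr hB⟩)
  · obtain ⟨v, ⟨hvc, hvA⟩, hvB⟩ := Set.nonempty_iff_ne_empty.2 h
    have hsub := conj2 (A ∩ B)ᶜ (Aᶜ ∪ B)
    rw [key] at hsub
    exact ⟨⟨hsub (fun hs => hs hvc ⟨hvA, hvB⟩) hw.1, hw.2.1⟩, hw.2.2⟩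
end

section
/- Let W be a type of (abductive) interpretations, S ⊆ W, and M ⊆ W, and let rev : Set W → Set W satisfy the revision postulates, for all A, B ⊆ W: rev A ⊆ A ∩ S; A ∩ S ≠ ∅ if and only if rev A ≠ ∅; if M ∩ A ≠ ∅ then rev A = M ∩ A; (rev A) ∩ B ⊆ rev(A ∩ B); and if (rev A) ∩ B ≠ ∅ then rev(A ∩ B) ⊆ (rev A) ∩ B. Define the contraction operator by the Harper identity con A := M ∪ rev(Aᶜ), where Aᶜ is the complement of A in W. Then con satisfies the contraction postulates, for all A, B ⊆ W: (closure) con A ⊆ S; (success) if S \ A ≠ ∅ then (con A) \ A ≠ ∅; (inclusion) M ⊆ con A; (vacuity) if ¬(M ⊆ A) then con A = M; (recovery) (con A) ∩ A ⊆ M; (conjunction 1) con(A ∩ B) ⊆ (con A) ∪ (con B); (conjunction 2) if ¬(con(A ∩ B) ⊆ A) then con A ⊆ con(A ∩ B). -/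
/-! The union with `M` in the Harper identity makes inclusion immediate, and `rev Aᶜ ⊆ Aᶜ ∩ S`
together with `M ⊆ S` yields closure and recovery; success holds because `rev Aᶜ` is a nonempty subset
of `Aᶜ` whenever `Aᶜ ∩ S` is nonempty. If some model in `M` falsifies `A`
then `rev Aᶜ = M ∩ Aᶜ ⊆ M`, which is vacuity. Both conjunction postulates rest on
`(A ∩ B)ᶜ ∩ Aᶜ = Aᶜ`: it turns the two postulates on revision by an intersection into a
comparison of `rev (A ∩ B)ᶜ ∩ Aᶜ` with `rev Aᶜ`. -/

/-- Harper identity: a revision operator satisfying the revision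
postulates yields, via `con A := M ∪ rev Aᶜ`, a contraction operator satisfying the
contraction postulates. -/
theorem harper_identity {W : Type*} (S M : Set W)
    (rev : Set W → Set W)
    (h1 : ∀ A : Set W, rev A ⊆ A ∩ S)
    (h2 : ∀ A : Set W, A ∩ S ≠ ∅ ↔ rev A ≠ ∅)
    (h3 : ∀ A : Set W, M ∩ A ≠ ∅ → rev A = M ∩ A)
    (h4 : ∀ A B : Set W, rev A ∩ B ⊆ rev (A ∩ B))
    (h5 : ∀ A B : Set W, rev A ∩ B ≠ ∅ → rev (A ∩ B) ⊆ rev A ∩ B)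
    (con : Set W → Set W)
    (hcon : ∀ A : Set W, con A = M ∪ rev Aᶜ) :
    (∀ A : Set W, con A ⊆ S) ∧
    (∀ A : Set W, (S \ A) ≠ ∅ → (con A \ A) ≠ ∅) ∧
    (∀ A : Set W, M ⊆ con A) ∧
    (∀ A : Set W, ¬ (M ⊆ A) → con A = M) ∧
    (∀ A : Set W, con A ∩ A ⊆ M) ∧
    (∀ A B : Set W, con (A ∩ B) ⊆ con A ∪ con B) ∧
    (∀ A B : Set W, ¬ (con (A ∩ B) ⊆ A) → con A ⊆ con (A ∩ B)) := by
  -- `M ⊆ S` is not assumed: it follows by revising with the tautology, since `rev univ = M`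
  -- as soon as `M` is nonempty.
  have hMS : M ⊆ S := by
    intro x hx
    have h := h3 Set.univ (Set.Nonempty.ne_empty ⟨x, hx, trivial⟩)
    exact (h1 Set.univ (h ▸ ⟨hx, trivial⟩)).2
  have hcompl : ∀ A B : Set W, (A ∩ B)ᶜ ∩ Aᶜ = Aᶜ := fun A B =>
    Set.inter_eq_right.2 (Set.compl_subset_compl.2 Set.inter_subset_left)
  have hrev : ∀ A : Set W, ∀ x ∈ M, x ∉ A → rev Aᶜ ⊆ M := by
    intro A x hx hxA
    rw [h3 Aᶜ (Set.Nonempty.ne_empty ⟨x, hx, hxA⟩)]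
    exact Set.inter_subset_left
  simp only [hcon]
  refine ⟨?_, ?_, ?_, ?_, ?_, ?_, ?_⟩
  · exact fun A => Set.union_subset hMS fun x hx => (h1 _ hx).2
  · intro A hA
    obtain ⟨x, hxS, hxA⟩ := Set.nonempty_iff_ne_empty.2 hA
    obtain ⟨y, hy⟩ := Set.nonempty_iff_ne_empty.2
      ((h2 Aᶜ).1 (Set.Nonempty.ne_empty ⟨x, hxA, hxS⟩))
    exact Set.Nonempty.ne_empty ⟨y, Or.inr hy, (h1 _ hy).1⟩
  · exact fun A => Set.subset_union_left
  · intro A hA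
    obtain ⟨x, hx, hxA⟩ := Set.not_subset.1 hA
    exact Set.union_eq_left.2 (hrev A x hx hxA)
  · rintro A x ⟨hx | hx, hxA⟩
    · exact hx
    · exact absurd hxA (h1 _ hx).1
  · rintro A B x (hx | hx)
    · exact Or.inl (Or.inl hx)
    · by_cases hxA : x ∈ A
      · have hxB : x ∉ B := fun hxB => (h1 _ hx).1 ⟨hxA, hxB⟩
        have h := h4 (A ∩ B)ᶜ Bᶜ ⟨hx, hxB⟩
        rw [Set.inter_comm A B, hcompl] at h
        exact Or.inr (Or.inr h)
      · have h := h4 (A ∩ B)ᶜ Aᶜ ⟨hx, hxA⟩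
        rw [hcompl] at h
        exact Or.inl (Or.inr h)
  · intro A B hA
    obtain ⟨y, hy | hy, hyA⟩ := Set.not_subset.1 hA
    · exact Set.union_subset Set.subset_union_left
        ((hrev A y hy hyA).trans Set.subset_union_left)
    · have h := h5 (A ∩ B)ᶜ Aᶜ (Set.Nonempty.ne_empty ⟨y, hy, hyA⟩)
      rw [hcompl] at h
      exact Set.union_subset_union_right M (h.trans Set.inter_subset_left)
end

section
/- Let W be a type of (abductive) interpretations, S ⊆ W, and M ⊆ W nonempty. An operator con : Set W → Set W satisfies the contraction postulates — for all A, B ⊆ W: (closure) con A ⊆ S; (success) if S \ A ≠ ∅ then (con A) \ A ≠ ∅; (inclusion) M ⊆ con A; (vacuity) if ¬(M ⊆ A) then con A = M; (recovery) (con A) ∩ A ⊆ M; (conjunction 1) con(A ∩ B) ⊆ (con A) ∪ (con B); (conjunction 2) if ¬(con(A ∩ B) ⊆ A) then con A ⊆ con(A ∩ B) — if and only if there exists a reflexive transitive relation ≼ on W that is total on S, has the minimality property on S (every nonempty F ⊆ S contains a ≼-minimal element of F), satisfies Min(S, ≼) = M, and represents con, i.e. con A = M ∪ Min(Aᶜ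 ∩ S, ≼) for all A ⊆ W, where Aᶜ is the complement of A in W. -/
/-- Under totality on `S`, minimal elements of subsets of `S` are the least ones. -/
lemma mem_minSet_iff_forall_le {W : Type*} {S F : Set W} {le : W → W → Prop}
    (tot : ∀ x ∈ S, ∀ y ∈ S, le x y ∨ le y x) (hF : F ⊆ S) {x : W} :
    x ∈ minSet F le ↔ x ∈ F ∧ ∀ y ∈ F, le x y := by
  constructor
  · rintro ⟨hx, h⟩
    refine ⟨hx, fun y hy => ?_⟩
    by_contra hn
    exact h y hy ⟨(tot x (hF hx) y (hF hy)).resolve_left hn, hn⟩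
  · rintro ⟨hx, h⟩
    exact ⟨hx, fun y hy hn => hn.2 (h y hy)⟩

/-- The relation induced by a contraction operator: on `S`, `x ≼ y` means that `x` survives the
contraction by `{x, y}ᶜ`; points outside `S` are above everything. -/
def conLe {W : Type*} (S : Set W) (con : Set W → Set W) (x y : W) : Prop :=
  y ∉ S ∨ (x ∈ S ∧ x ∈ con {x, y}ᶜ)

/-- representation theorem for contraction: an operator satisfies the
contraction postulates iff it is generated by `con A = M ∪ Min(Aᶜ ∩ S, ≼)` for some
faithful rational order `≼`. -/
theorem contraction_representation {W : Type*} (S M : Set W) (hM : M.Nonempty)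
    (con : Set W → Set W) :
    ((∀ A : Set W, con A ⊆ S) ∧
     (∀ A : Set W, (S \ A) ≠ ∅ → (con A \ A) ≠ ∅) ∧
     (∀ A : Set W, M ⊆ con A) ∧
     (∀ A : Set W, ¬ (M ⊆ A) → con A = M) ∧
     (∀ A : Set W, con A ∩ A ⊆ M) ∧
     (∀ A B : Set W, con (A ∩ B) ⊆ con A ∪ con B) ∧
     (∀ A B : Set W, ¬ (con (A ∩ B) ⊆ A) → con A ⊆ con (A ∩ B))) ↔
    (∃ le : W → W → Prop,
      Reflexive le ∧ Transitive le ∧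
      (∀ x ∈ S, ∀ y ∈ S, le x y ∨ le y x) ∧
      (∀ F : Set W, F ⊆ S → F.Nonempty → (minSet F le).Nonempty) ∧
      minSet S le = M ∧
      (∀ A : Set W, con A = M ∪ minSet (Aᶜ ∩ S) le)) := by
  constructor
  · rintro ⟨closure, success, inclusion, vacuity, recovery, conj1, conj2⟩
    have chosen : ∀ A x, x ∈ S → x ∉ A → ∃ w ∈ con A, w ∉ A := by
      intro A x hx hxA
      obtain ⟨w, hw⟩ := Set.nonempty_iff_ne_empty.mpr
        (success A (Set.nonempty_iff_ne_empty.mp ⟨x, hx, hxA⟩))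
      exact ⟨w, hw.1, hw.2⟩
    have shrink : ∀ A B x, A ⊆ B → x ∈ con A → x ∉ B → x ∈ con B := by
      intro A B x hAB hx hxB
      -- Write `A` as `(A ∪ Bᶜ) ∩ B`; recovery excludes the first alternative of `conj1`
      -- unless `x ∈ M`.
      have e : (A ∪ Bᶜ) ∩ B = A := by
        ext z
        have := @hAB z
        simp only [Set.mem_inter_iff, Set.mem_union, Set.mem_compl_iff]
        tauto
      rcases conj1 (A ∪ Bᶜ) B (e.symm ▸ hx) with h | h
      · exact inclusion B (recovery _ ⟨h, Or.inr hxB⟩)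
      · exact h
    have expand : ∀ A B w, A ⊆ B → w ∈ con A → w ∉ B → con B ⊆ con A := by
      intro A B w hAB hw hwB
      have e : B ∩ A = A := Set.inter_eq_right.mpr hAB
      have h := conj2 B A
      rw [e] at h
      exact h fun hc => hwB (hc hw)
    have pair_sub : ∀ (A : Set W) x y, x ∉ A → y ∉ A → A ⊆ {x, y}ᶜ := by
      intro A x y hx hy z hz hzxy
      rcases hzxy with rfl | rfl
      · exact hx hz
      · exact hy hz
    have le_of_con : ∀ A x y, x ∈ con A → x ∉ A → y ∉ A → conLe S con x y :=
      fun A x y hx hxA hyA => Or.inr ⟨closure A hx,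
        shrink A _ x (pair_sub A x y hxA hyA) hx (by simp)⟩
    have con_of_le : ∀ A x y, y ∈ con A → x ∉ A → y ∉ A → conLe S con x y → x ∈ con A := by
      intro A x y hy hxA hyA h
      rcases h with h | ⟨-, h⟩
      · exact absurd (closure A hy) h
      · exact expand A _ y (pair_sub A x y hxA hyA) hy (by simp) h
    have tot : ∀ x ∈ S, ∀ y ∈ S, conLe S con x y ∨ conLe S con y x := by
      intro x hx y hy
      obtain ⟨w, hw, hwn⟩ := chosen {x, y}ᶜ x hx (by simp)
      rcases not_not.mp hwn with rfl | rfl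
      · exact Or.inl (le_of_con _ _ _ hw (by simp) (by simp))
      · exact Or.inr (le_of_con _ _ _ hw (by simp) (by simp))
    have key : ∀ A x, x ∈ minSet (Aᶜ ∩ S) (conLe S con) ↔ x ∈ con A ∧ x ∉ A := by
      intro A x
      rw [mem_minSet_iff_forall_le tot Set.inter_subset_right]
      constructor
      · rintro ⟨⟨hxA, hxS⟩, h⟩
        obtain ⟨w, hw, hwA⟩ := chosen A x hxS hxA
        exact ⟨con_of_le A x w hw hxA hwA (h w ⟨hwA, closure A hw⟩), hxA⟩
      · rintro ⟨hx, hxA⟩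
        exact ⟨⟨hxA, closure A hx⟩, fun y hy => le_of_con A x y hx hxA hy.1⟩
    refine ⟨conLe S con, ?_, ?_, tot, ?_, ?_, ?_⟩
    · intro x
      by_cases hx : x ∈ S
      · exact (tot x hx x hx).elim id id
      · exact Or.inl hx
    · intro x y z hxy hyz
      by_cases hz : z ∈ S
      · obtain ⟨w, hw, hwn⟩ := chosen {x, y, z}ᶜ z hz (by simp)
        suffices hx : x ∈ con {x, y, z}ᶜ from le_of_con _ _ _ hx (by simp) (by simp)
        have of_y : y ∈ con {x, y, z}ᶜ → x ∈ con {x, y, z}ᶜ :=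
          fun hy => con_of_le _ x y hy (by simp) (by simp) hxy
        rcases not_not.mp hwn with h | h | h
        · exact h ▸ hw
        · exact of_y (h ▸ hw)
        · have hzc : z ∈ con {x, y, z}ᶜ := (show w = z from h) ▸ hw
          exact of_y (con_of_le _ y z hzc (by simp) (by simp) hyz)
      · exact Or.inl hz
    · rintro F hF ⟨x, hx⟩
      obtain ⟨w, hw, hwn⟩ := chosen Fᶜ x (hF hx) (not_not.mpr hx)
      have h := (key Fᶜ w).mpr ⟨hw, hwn⟩
      rw [compl_compl, Set.inter_eq_left.mpr hF] at h
      exact ⟨w, h⟩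
    · have hMS : M ⊆ S := (inclusion ∅).trans (closure ∅)
      have hv : con Sᶜ = M := by
        obtain ⟨m, hm⟩ := hM
        exact vacuity _ fun h => h hm (hMS hm)
      ext x
      have h := key Sᶜ x
      rw [compl_compl, Set.inter_self, hv] at h
      exact h.trans ⟨And.left, fun hx => ⟨hx, not_not.mpr (hMS hx)⟩⟩
    · intro A
      ext x
      rw [Set.mem_union, key]
      constructor
      · intro hx
        by_cases hxA : x ∈ A
        · exact Or.inl (recovery A ⟨hx, hxA⟩)
        · exact Or.inr ⟨hx, hxA⟩
      · rintro (h | h)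
        · exact inclusion A h
        · exact h.1
  · rintro ⟨le, -, trans, tot, minimality, hmin, rep⟩
    have memM : ∀ x, x ∈ M ↔ x ∈ S ∧ ∀ y ∈ S, le x y := by
      intro x
      rw [← hmin]
      exact mem_minSet_iff_forall_le tot subset_rfl
    have memMin : ∀ A x, x ∈ minSet (Aᶜ ∩ S) le ↔ x ∈ Aᶜ ∩ S ∧ ∀ y ∈ Aᶜ ∩ S, le x y :=
      fun A x => mem_minSet_iff_forall_le tot Set.inter_subset_right
    have memCon : ∀ A x, x ∈ con A ↔ x ∈ M ∨ (x ∈ Aᶜ ∩ S ∧ ∀ y ∈ Aᶜ ∩ S, le x y) := by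
      intro A x
      rw [rep, Set.mem_union, memMin]
    -- A least element of `Aᶜ ∩ S` lies below any member of `M` outside `A`, hence below all of `S`.
    have least_mem_M : ∀ A m x, m ∈ M → m ∉ A → x ∈ Aᶜ ∩ S → (∀ y ∈ Aᶜ ∩ S, le x y) → x ∈ M := by
      intro A m x hm hmA hx h
      have hm' := (memM m).mp hm
      exact (memM x).mpr ⟨hx.2, fun y hy => trans (h m ⟨hmA, hm'.1⟩) (hm'.2 y hy)⟩
    refine ⟨?_, ?_, ?_, ?_, ?_, ?_, ?_⟩
    · intro A x hx
      rcases (memCon A x).mp hx with h | h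
      · exact ((memM x).mp h).1
      · exact h.1.2
    · intro A hA
      obtain ⟨x, hxS, hxA⟩ := Set.nonempty_iff_ne_empty.mpr hA
      obtain ⟨w, hw⟩ := minimality (Aᶜ ∩ S) Set.inter_subset_right ⟨x, hxA, hxS⟩
      refine Set.nonempty_iff_ne_empty.mp ⟨w, ?_, hw.1.1⟩
      rw [rep]
      exact Or.inr hw
    · intro A x hx
      exact (memCon A x).mpr (Or.inl hx)
    · intro A hA
      obtain ⟨m, hm, hmA⟩ := Set.not_subset.mp hA
      ext x
      rw [memCon]
      exact ⟨fun h => h.elim id fun h => least_mem_M A m x hm hmA h.1 h.2, Or.inl⟩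
    · rintro A x ⟨hx, hxA⟩
      rcases (memCon A x).mp hx with h | h
      · exact h
      · exact absurd hxA h.1.1
    · intro A B x hx
      rcases (memCon _ x).mp hx with h | ⟨⟨hxn, hxS⟩, h⟩
      · exact Or.inl ((memCon A x).mpr (Or.inl h))
      · by_cases hxA : x ∈ A
        · exact Or.inr ((memCon B x).mpr (Or.inr ⟨⟨fun hxB => hxn ⟨hxA, hxB⟩, hxS⟩,
            fun y hy => h y ⟨fun hyAB => hy.1 hyAB.2, hy.2⟩⟩))
        · exact Or.inl ((memCon A x).mpr (Or.inr ⟨⟨hxA, hxS⟩,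
            fun y hy => h y ⟨fun hyAB => hy.1 hyAB.1, hy.2⟩⟩))
    · intro A B hAB x hx
      obtain ⟨w, hw, hwA⟩ := Set.not_subset.mp hAB
      rw [memCon]
      rcases (memCon A x).mp hx with h | ⟨hxA, h⟩
      · exact Or.inl h
      · rcases (memCon _ w).mp hw with hwM | ⟨hwn, hw'⟩
        · exact Or.inl (least_mem_M A w x hwM hwA hxA h)
        · exact Or.inr ⟨⟨fun hxAB => hxA.1 hxAB.1, hxA.2⟩,
            fun y hy => trans (h w ⟨hwA, hwn.2⟩) (hw' y hy)⟩
end
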